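/- Let A ⊂ ℝ² be a compact, centrally symmetric (A = −A) convex set with nonempty interior, and set s := min_{m ∈ ℤ²∖{0}} sup_{x∈A} ⟨m,x⟩ (the systole of the codisc bundle of the flat reversible Finsler metric with dual unit ball A). If area(A) ≥ 4s² (equivalently, the systolic ratio s²/(2·area(A)) is at most 1/8), then for every vector v ∈ ℝ² with interior(A) + v ⊆ ℝ²_{>0} and every normalized symplectic capacity c on subsets of ℝ⁴, c(μ⁻¹(interior(A)+v)) = 2s. -/

import Mathlib

open Set
open scoped Pointwise ENNReal

noncomputable section

/-- The standard symplectic form `ω₀` on `ℝ⁴ ≅ ℂ²`: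
`ω₀(u,v) = Σⱼ (u_{xⱼ} v_{yⱼ} - u_{yⱼ} v_{xⱼ}) = Σⱼ Im(conj(uⱼ) · vⱼ)`. -/
def stdSymp4 (u v : ℂ × ℂ) : ℝ :=
  ((starRingEnd ℂ) u.1 * v.1).im + ((starRingEnd ℂ) u.2 * v.2).im

/-- `U` symplectically embeds into `V` inside `ℝ⁴ ≅ ℂ²`: there is a smooth injective
map on `U` with image in `V` whose derivative preserves `ω₀`. -/
def SymplecticEmbeds4 (U V : Set (ℂ × ℂ)) : Prop :=
  ∃ f : ℂ × ℂ → ℂ × ℂ,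
    ContDiffOn ℝ (⊤ : ℕ∞) f U ∧ Set.InjOn f U ∧ Set.MapsTo f U V ∧
    ∀ x ∈ U, ∀ u v : ℂ × ℂ,
      stdSymp4 (fderivWithin ℝ f U x u) (fderivWithin ℝ f U x v) = stdSymp4 u v

/-- The moment map `μ : ℂ² → ℝ²`, `μ(z) = π(|z₁|², |z₂|²)`. -/
def mu4 (z : ℂ × ℂ) : ℝ × ℝ :=
  (Real.pi * Complex.normSq z.1, Real.pi * Complex.normSq z.2)

/-- The open Euclidean ball `B⁴(r) ⊆ ℂ²`. -/
def ball4 (r : ℝ) : Set (ℂ × ℂ) :=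
  {z | Complex.normSq z.1 + Complex.normSq z.2 < r ^ 2}

/-- The open symplectic cylinder `Z⁴(r) = {z ∈ ℂ² : |z₁| < r}`. -/
def cyl4 (r : ℝ) : Set (ℂ × ℂ) :=
  {z | Complex.normSq z.1 < r ^ 2}

/-- A normalized symplectic capacity on subsets of `ℝ⁴ ≅ ℂ²`: monotone under
symplectic embeddings, conformal, and normalized on balls and cylinders. -/
def IsNormalizedCapacity4 (c : Set (ℂ × ℂ) → ℝ≥0∞) : Prop :=
  (∀ U V : Set (ℂ × ℂ), SymplecticEmbeds4 U V → c U ≤ c V) ∧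
  (∀ lam : ℝ, 0 < lam → ∀ U : Set (ℂ × ℂ),
    c (lam • U) = ENNReal.ofReal (lam ^ 2) * c U) ∧
  (∀ r : ℝ, 0 < r →
    c (ball4 r) = ENNReal.ofReal (Real.pi * r ^ 2) ∧
    c (cyl4 r) = ENNReal.ofReal (Real.pi * r ^ 2))


/-- Packaging: embeddings given by polar coordinates. -/
lemma aux_embed {U V : Set (ℂ × ℂ)} (hU : IsOpen U) (f : ℂ × ℂ → ℂ × ℂ)
    (hc : ContDiffOn ℝ (⊤ : ℕ∞) f U) (hi : Set.InjOn f U) (hm : Set.MapsTo f U V)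
    (hd : ∀ x ∈ U, ∃ f' : ℂ × ℂ →L[ℝ] ℂ × ℂ, HasFDerivAt f f' x ∧
      ∀ u v, stdSymp4 (f' u) (f' v) = stdSymp4 u v) : SymplecticEmbeds4 U V := by
  refine ⟨f, hc, hi, hm, fun x hx u v => ?_⟩
  obtain ⟨f', h1, h2⟩ := hd x hx
  rw [fderivWithin_of_isOpen hU hx, h1.fderiv]
  exact h2 u v

/-- Polar coordinates are symplectic. -/
lemma aux_polar {P : ℂ × ℂ → ℝ} {P' : ℂ × ℂ →L[ℝ] ℝ} {e : ℂ × ℂ → ℂ} {e' : ℂ × ℂ →L[ℝ] ℂ}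
    {x : ℂ × ℂ} {β : ℂ × ℂ → ℝ} (hP : HasFDerivAt P P' x) (hpos : 0 < P x)
    (he : HasFDerivAt e e' x) (hβ : ∀ u, e' u = e x * (Complex.I * (β u : ℂ)))
    (h1 : Complex.normSq (e x) = 1) :
    ∃ g' : ℂ × ℂ →L[ℝ] ℂ,
      HasFDerivAt (fun z => ((Real.sqrt (P z / Real.pi) : ℝ) : ℂ) * e z) g' x ∧
      ∀ u v, ((starRingEnd ℂ) (g' u) * g' v).im =
        (1 / (2 * Real.pi)) * (P' u * β v - β u * P' v) := by
  have hpi := Real.pi_pos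
  have hq : 0 < P x / Real.pi := by positivity
  have hs := (hP.mul_const (Real.pi⁻¹)).sqrt (by rw [← div_eq_mul_inv]; exact hq.ne')
  have hs2 := Complex.ofRealCLM.hasFDerivAt.comp x hs
  have := hs2.mul he
  refine ⟨_, this.congr_of_eventuallyEq (Filter.Eventually.of_forall fun z => by
    simp [div_eq_mul_inv]), fun u v => ?_⟩
  have hr : 0 < Real.sqrt (P x * Real.pi⁻¹) := Real.sqrt_pos.2 (by rw [← div_eq_mul_inv]; exact hq)
  have hr2 : Real.sqrt (P x * Real.pi⁻¹) ≠ 0 := hr.ne'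
  simp only [add_apply, smul_apply,
    ContinuousLinearMap.comp_apply, hβ, Complex.ofRealCLM_apply, Function.comp, smul_eq_mul]
  set r := Real.sqrt (P x * Real.pi⁻¹)
  rw [Complex.normSq_apply] at h1
  generalize e x = E at *
  simp [-mul_inv_rev]
  field_simp
  linear_combination 2 * r ^ 2 * Real.pi * (P' u * β v - β u * P' v) * h1

/-- A two-variable embedding in polar form. -/
def polMap (P₁ P₂ : ℂ × ℂ → ℝ) (e₁ e₂ : ℂ × ℂ → ℂ) (z : ℂ × ℂ) : ℂ × ℂ :=
  (((Real.sqrt (P₁ z / Real.pi) : ℝ) : ℂ) * e₁ z, ((Real.sqrt (P₂ z / Real.pi) : ℝ) : ℂ) * e₂ z)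

lemma polMap_mu {P₁ P₂ : ℂ × ℂ → ℝ} {e₁ e₂ : ℂ × ℂ → ℂ} {z : ℂ × ℂ}
    (h1 : 0 < P₁ z) (h2 : 0 < P₂ z) (n1 : Complex.normSq (e₁ z) = 1)
    (n2 : Complex.normSq (e₂ z) = 1) : mu4 (polMap P₁ P₂ e₁ e₂ z) = (P₁ z, P₂ z) := by
  have hpi := Real.pi_pos
  have a1 : 0 ≤ P₁ z / Real.pi := by positivity
  have a2 : 0 ≤ P₂ z / Real.pi := by positivity
  simp only [mu4, polMap, Complex.normSq_mul, n1, n2, Complex.normSq_ofReal,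
    Real.mul_self_sqrt a1, Real.mul_self_sqrt a2, mul_one]
  ext <;> simp <;> field_simp

lemma polMap_cancel {P₁ P₂ : ℂ × ℂ → ℝ} {e₁ e₂ : ℂ × ℂ → ℂ} {z w : ℂ × ℂ}
    (h1 : 0 < P₁ z) (h2 : 0 < P₂ z) (n1 : Complex.normSq (e₁ z) = 1)
    (n2 : Complex.normSq (e₂ z) = 1)
    (h1' : 0 < P₁ w) (h2' : 0 < P₂ w) (n1' : Complex.normSq (e₁ w) = 1)
    (n2' : Complex.normSq (e₂ w) = 1)
    (h : polMap P₁ P₂ e₁ e₂ z = polMap P₁ P₂ e₁ e₂ w) :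
    P₁ z = P₁ w ∧ P₂ z = P₂ w ∧ e₁ z = e₁ w ∧ e₂ z = e₂ w := by
  have hpi := Real.pi_pos
  have hm := congrArg mu4 h
  rw [polMap_mu h1 h2 n1 n2, polMap_mu h1' h2' n1' n2'] at hm
  obtain ⟨q1, q2⟩ := Prod.ext_iff.1 hm
  simp only at q1 q2
  obtain ⟨r1, r2⟩ := Prod.ext_iff.1 h
  simp only [polMap, q1, q2] at r1 r2
  refine ⟨q1, q2, mul_left_cancel₀ ?_ r1, mul_left_cancel₀ ?_ r2⟩
  · exact Complex.ofReal_ne_zero.2 (Real.sqrt_pos.2 (by positivity)).ne'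
  · exact Complex.ofReal_ne_zero.2 (Real.sqrt_pos.2 (by positivity)).ne'

lemma polMap_smooth {P₁ P₂ : ℂ × ℂ → ℝ} {e₁ e₂ : ℂ × ℂ → ℂ} {U : Set (ℂ × ℂ)}
    (hP₁ : ContDiffOn ℝ (⊤ : ℕ∞) P₁ U) (hP₂ : ContDiffOn ℝ (⊤ : ℕ∞) P₂ U)
    (he₁ : ContDiffOn ℝ (⊤ : ℕ∞) e₁ U) (he₂ : ContDiffOn ℝ (⊤ : ℕ∞) e₂ U)
    (h1 : ∀ z ∈ U, 0 < P₁ z) (h2 : ∀ z ∈ U, 0 < P₂ z) :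
    ContDiffOn ℝ (⊤ : ℕ∞) (polMap P₁ P₂ e₁ e₂) U := by
  have hpi := Real.pi_pos
  refine ContDiffOn.prodMk (ContDiffOn.mul ?_ he₁) (ContDiffOn.mul ?_ he₂)
  · refine Complex.ofRealCLM.contDiff.comp_contDiffOn ((hP₁.div_const _).sqrt fun z hz => ?_)
    have := h1 z hz
    positivity
  · refine Complex.ofRealCLM.contDiff.comp_contDiffOn ((hP₂.div_const _).sqrt fun z hz => ?_)
    have := h2 z hz
    positivity

lemma polMap_symp {P₁ P₂ : ℂ × ℂ → ℝ} {P₁' P₂' : ℂ × ℂ →L[ℝ] ℝ} {e₁ e₂ : ℂ × ℂ → ℂ}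
    {e₁' e₂' : ℂ × ℂ →L[ℝ] ℂ} {x : ℂ × ℂ} {β₁ β₂ : ℂ × ℂ → ℝ}
    (hP₁ : HasFDerivAt P₁ P₁' x) (hpos₁ : 0 < P₁ x)
    (he₁ : HasFDerivAt e₁ e₁' x) (hβ₁ : ∀ u, e₁' u = e₁ x * (Complex.I * (β₁ u : ℂ)))
    (n₁ : Complex.normSq (e₁ x) = 1)
    (hP₂ : HasFDerivAt P₂ P₂' x) (hpos₂ : 0 < P₂ x)
    (he₂ : HasFDerivAt e₂ e₂' x) (hβ₂ : ∀ u, e₂' u = e₂ x * (Complex.I * (β₂ u : ℂ)))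
    (n₂ : Complex.normSq (e₂ x) = 1)
    (H : ∀ u v, (P₁' u * β₁ v - β₁ u * P₁' v) + (P₂' u * β₂ v - β₂ u * P₂' v) =
      2 * Real.pi * stdSymp4 u v) :
    ∃ f' : ℂ × ℂ →L[ℝ] ℂ × ℂ, HasFDerivAt (polMap P₁ P₂ e₁ e₂) f' x ∧
      ∀ u v, stdSymp4 (f' u) (f' v) = stdSymp4 u v := by
  have hpi := Real.pi_pos
  obtain ⟨g₁, hg₁, k₁⟩ := aux_polar hP₁ hpos₁ he₁ hβ₁ n₁
  obtain ⟨g₂, hg₂, k₂⟩ := aux_polar hP₂ hpos₂ he₂ hβ₂ n₂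
  refine ⟨_, hg₁.prodMk hg₂, fun u v => ?_⟩
  have : stdSymp4 ((g₁.prod g₂) u) ((g₁.prod g₂) v) =
    ((starRingEnd ℂ) (g₁ u) * g₁ v).im + ((starRingEnd ℂ) (g₂ u) * g₂ v).im := rfl
  rw [this, k₁, k₂, ← mul_add, H]
  field_simp

/-- The angular part of a complex number. -/
def ang (z : ℂ) : ℂ := z * ((Real.sqrt (Complex.normSq z))⁻¹ : ℝ)

lemma ang_normSq {z : ℂ} (hz : z ≠ 0) : Complex.normSq (ang z) = 1 := by
  have h := Complex.normSq_pos.2 hz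
  rw [ang, Complex.normSq_mul, Complex.normSq_ofReal, ← mul_inv, Real.mul_self_sqrt h.le]
  field_simp

lemma normSq_hasFDerivAt (z : ℂ) : ∃ N : ℂ →L[ℝ] ℝ, HasFDerivAt Complex.normSq N z ∧
    ∀ u, N u = 2 * (z.re * u.re + z.im * u.im) := by
  have h1 := Complex.reCLM.hasFDerivAt (x := z)
  have h2 := Complex.imCLM.hasFDerivAt (x := z)
  refine ⟨_, ((h1.mul h1).add (h2.mul h2)).congr_of_eventuallyEq
    (Filter.Eventually.of_forall fun w => by simp [Complex.normSq_apply]), fun u => ?_⟩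
  simp
  ring

lemma normSq_contDiff : ContDiff ℝ (⊤ : ℕ∞) (fun z : ℂ => Complex.normSq z) := by
  have h1 : ContDiff ℝ (⊤ : ℕ∞) (fun z : ℂ => z.re) := Complex.reCLM.contDiff
  have h2 : ContDiff ℝ (⊤ : ℕ∞) (fun z : ℂ => z.im) := Complex.imCLM.contDiff
  simp only [Complex.normSq_apply]
  exact (h1.mul h1).add (h2.mul h2)

lemma ang_hasFDerivAt {z : ℂ} (hz : z ≠ 0) : ∃ N : ℂ →L[ℝ] ℂ, HasFDerivAt ang N z ∧
    ∀ u, N u = ang z * (Complex.I *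
      (((z.re * u.im - z.im * u.re) / Complex.normSq z : ℝ) : ℂ)) := by
  have h := Complex.normSq_pos.2 hz
  obtain ⟨N, hN, hN'⟩ := normSq_hasFDerivAt z
  have hs := Real.sqrt_pos.2 h
  have h1 := (hasDerivAt_inv hs.ne').comp_hasFDerivAt z (hN.sqrt h.ne')
  have h2 := Complex.ofRealCLM.hasFDerivAt.comp z h1
  have h3 := (hasFDerivAt_id (𝕜 := ℝ) z).mul h2
  refine ⟨_, h3, fun u => ?_⟩
  have hq : Real.sqrt (Complex.normSq z) ^ 2 = z.re * z.re + z.im * z.im := by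
    rw [Real.sq_sqrt h.le, Complex.normSq_apply]
  have hn : Complex.normSq z = Real.sqrt (Complex.normSq z) ^ 2 := (Real.sq_sqrt h.le).symm
  unfold ang
  generalize hr : Real.sqrt (Complex.normSq z) = r at *
  have hc1 : ((r : ℂ) ^ 2).re = r ^ 2 := by rw [← Complex.ofReal_pow, Complex.ofReal_re]
  have hc2 : ((r : ℂ) ^ 2).im = 0 := by rw [← Complex.ofReal_pow, Complex.ofReal_im]
  apply Complex.ext
  · simp [hN', hr, hc1, hc2]
    rw [hn]
    field_simp
    linear_combination u.re * hq
  · simp [hN', hr, hc1, hc2]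
    rw [hn]
    field_simp
    linear_combination u.im * hq

lemma ang_contDiffAt {z : ℂ} (hz : z ≠ 0) : ContDiffAt ℝ (⊤ : ℕ∞) ang z := by
  have h := Complex.normSq_pos.2 hz
  refine contDiffAt_id.mul (Complex.ofRealCLM.contDiff.contDiffAt.comp z
    (ContDiffAt.inv (normSq_contDiff.contDiffAt.sqrt h.ne') (Real.sqrt_pos.2 h).ne'))

lemma eq_of_ang {z w : ℂ} (h : Complex.normSq z = Complex.normSq w) (hz : z ≠ 0)
    (h' : ang z = ang w) : z = w := by
  unfold ang at h'
  rw [← h] at h'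
  refine mul_right_cancel₀ ?_ h'
  exact Complex.ofReal_ne_zero.2 (inv_pos.2 (Real.sqrt_pos.2 (Complex.normSq_pos.2 hz))).ne'

lemma zpow_log {e : ℂ × ℂ → ℂ} {e' : ℂ × ℂ →L[ℝ] ℂ} {x : ℂ × ℂ} {β : ℂ × ℂ → ℝ} (n : ℤ)
    (he : HasFDerivAt e e' x) (hβ : ∀ u, e' u = e x * (Complex.I * (β u : ℂ))) (h0 : e x ≠ 0) :
    ∃ g' : ℂ × ℂ →L[ℝ] ℂ, HasFDerivAt (fun z => e z ^ n) g' x ∧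
      ∀ u, g' u = e x ^ n * (Complex.I * ((n * β u : ℝ) : ℂ)) := by
  have h := ((hasDerivAt_zpow n (e x) (Or.inl h0)).hasFDerivAt.restrictScalars ℝ).comp x he
  refine ⟨_, h, fun u => ?_⟩
  simp [hβ, zpow_sub_one₀ h0]
  field_simp

lemma mul_log {e f : ℂ × ℂ → ℂ} {e' f' : ℂ × ℂ →L[ℝ] ℂ} {x : ℂ × ℂ} {β γ : ℂ × ℂ → ℝ}
    (he : HasFDerivAt e e' x) (hβ : ∀ u, e' u = e x * (Complex.I * (β u : ℂ)))
    (hf : HasFDerivAt f f' x) (hγ : ∀ u, f' u = f x * (Complex.I * (γ u : ℂ))) :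
    ∃ g' : ℂ × ℂ →L[ℝ] ℂ, HasFDerivAt (fun z => e z * f z) g' x ∧
      ∀ u, g' u = (e x * f x) * (Complex.I * ((β u + γ u : ℝ) : ℂ)) := by
  refine ⟨_, he.mul hf, fun u => ?_⟩
  simp [hβ, hγ]
  ring

lemma zpow_contDiffAt {e : ℂ × ℂ → ℂ} {x : ℂ × ℂ} (n : ℤ)
    (he : ContDiffAt ℝ (⊤ : ℕ∞) e x) (h0 : e x ≠ 0) :
    ContDiffAt ℝ (⊤ : ℕ∞) (fun z => e z ^ n) x := by
  cases n with
  | ofNat k => simpa using he.pow k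
  | negSucc k =>
    simp only [zpow_negSucc]
    exact (he.pow (k + 1)).inv (pow_ne_zero _ h0)

/-- Auxiliary quantities for an explicit area preserving map of the disc to a strip
(action-angle coordinates of the potential `tan²`). -/
def TT (b : ℝ) (z : ℂ) : ℝ := Real.pi * Complex.normSq z / 2 + b
def kk (b : ℝ) (z : ℂ) : ℝ := Real.sqrt (Real.pi * (Real.pi * Complex.normSq z / 4 + b))
def SS (b : ℝ) (z : ℂ) : ℝ := kk b z * z.im / TT b z
def CC (b : ℝ) (z : ℂ) : ℝ := Real.sqrt (1 - SS b z ^ 2)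
def pp (b : ℝ) (z : ℂ) : ℝ := kk b z * z.re / CC b z
def qq (b : ℝ) (z : ℂ) : ℝ := Real.arcsin (SS b z) / Real.pi

lemma TT_pos {b : ℝ} (hb : 0 < b) (z : ℂ) : 0 < TT b z := by
  have := Complex.normSq_nonneg z
  unfold TT
  positivity

lemma kk_arg_pos {b : ℝ} (hb : 0 < b) (z : ℂ) :
    0 < Real.pi * (Real.pi * Complex.normSq z / 4 + b) := by
  have := Complex.normSq_nonneg z
  positivity

lemma kk_pos {b : ℝ} (hb : 0 < b) (z : ℂ) : 0 < kk b z := Real.sqrt_pos.2 (kk_arg_pos hb z)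

lemma kk_sq {b : ℝ} (hb : 0 < b) (z : ℂ) :
    kk b z ^ 2 = Real.pi * (Real.pi * Complex.normSq z / 4 + b) := Real.sq_sqrt (kk_arg_pos hb z).le

lemma energy {b : ℝ} (hb : 0 < b) (z : ℂ) :
    kk b z ^ 2 * (z.re ^ 2 + z.im ^ 2) = TT b z ^ 2 - b ^ 2 := by
  rw [kk_sq hb, TT, Complex.normSq_apply]
  ring

lemma SS_sq_lt {b : ℝ} (hb : 0 < b) (z : ℂ) : SS b z ^ 2 < 1 := by
  have h := energy hb z
  have hT := TT_pos hb z
  rw [SS, div_pow, div_lt_one (by positivity)]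
  nlinarith [sq_nonneg (kk b z * z.re)]

lemma CC_pos {b : ℝ} (hb : 0 < b) (z : ℂ) : 0 < CC b z :=
  Real.sqrt_pos.2 (by linarith [SS_sq_lt hb z])

lemma CC_sq {b : ℝ} (hb : 0 < b) (z : ℂ) : CC b z ^ 2 = 1 - SS b z ^ 2 :=
  Real.sq_sqrt (by linarith [SS_sq_lt hb z])

lemma SS_bd {b : ℝ} (hb : 0 < b) (z : ℂ) : -1 < SS b z ∧ SS b z < 1 := by
  have := abs_lt.1 ((sq_lt_one_iff_abs_lt_one _).1 (SS_sq_lt hb z))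
  exact this

lemma pp_bd {b : ℝ} (hb : 0 < b) (z : ℂ) : |pp b z| < TT b z := by
  have hT := TT_pos hb z
  have hC := CC_pos hb z
  have hS : SS b z * TT b z = kk b z * z.im := by
    unfold SS
    field_simp
  have hC2 := CC_sq hb z
  have h := energy hb z
  apply abs_lt_of_sq_lt_sq _ hT.le
  rw [pp, div_pow, div_lt_iff₀ (by positivity), hC2]
  have : TT b z ^ 2 * (1 - SS b z ^ 2) = TT b z ^ 2 - (SS b z * TT b z) ^ 2 := by ring
  rw [this, hS]
  nlinarith [pow_pos hb 2]

lemma qq_bd {b : ℝ} (hb : 0 < b) (z : ℂ) : -(1 / 2) < qq b z ∧ qq b z < 1 / 2 := by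
  obtain ⟨h1, h2⟩ := SS_bd hb z
  have hpi := Real.pi_pos
  have h3 := Real.neg_pi_div_two_lt_arcsin.2 h1
  have h4 := Real.arcsin_lt_pi_div_two.2 h2
  unfold qq
  constructor
  · rw [lt_div_iff₀ hpi]; linarith
  · rw [div_lt_iff₀ hpi]; linarith

lemma pq_inj {b : ℝ} (hb : 0 < b) {z w : ℂ} (hp : pp b z = pp b w) (hq : qq b z = qq b w) :
    z = w := by
  have hpi := Real.pi_pos
  have hS : SS b z = SS b w := by
    have : Real.arcsin (SS b z) = Real.arcsin (SS b w) := by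
      unfold qq at hq
      field_simp at hq
      exact hq
    have h1 := SS_bd hb z
    have h2 := SS_bd hb w
    exact (Real.arcsin_inj h1.1.le h1.2.le h2.1.le h2.2.le).1 this
  have hC : CC b z = CC b w := by unfold CC; rw [hS]
  have hCp := CC_pos hb w
  have key : ∀ x : ℂ, (TT b x ^ 2) * CC b x ^ 2 = pp b x ^ 2 * CC b x ^ 2 + b ^ 2 := by
    intro x
    have hT := TT_pos hb x
    have hCx := CC_pos hb x
    have e1 : SS b x * TT b x = kk b x * x.im := by unfold SS; field_simp
    have e2 : pp b x * CC b x = kk b x * x.re := by unfold pp; field_simp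
    have h := energy hb x
    rw [← mul_pow (pp b x), e2, CC_sq hb x]
    linear_combination -h - (SS b x * TT b x + kk b x * x.im) * e1
  have hT : TT b z = TT b w := by
    have h1 := key z
    have h2 := key w
    rw [hC, hp, ← h2] at h1
    have h3 := mul_right_cancel₀ (pow_pos hCp 2).ne' h1
    exact (pow_left_inj₀ (TT_pos hb z).le (TT_pos hb w).le two_ne_zero).1 h3
  have hk : kk b z = kk b w := by
    have : Real.pi * Complex.normSq z = Real.pi * Complex.normSq w := by
      unfold TT at hT; linarith
    unfold kk
    rw [this]
  have hkp := kk_pos hb w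
  have hTp := TT_pos hb w
  apply Complex.ext
  · unfold pp at hp
    rw [hk, hC] at hp
    field_simp at hp
    exact hp
  · unfold SS at hS
    rw [hk, hT] at hS
    field_simp at hS
    exact hS

lemma pq_deriv {b : ℝ} (hb : 0 < b) (z : ℂ) : ∃ p' q' : ℂ →L[ℝ] ℝ,
    HasFDerivAt (pp b) p' z ∧ HasFDerivAt (qq b) q' z ∧
    ∀ u v, p' u * q' v - q' u * p' v = ((starRingEnd ℂ) u * v).im := by
  have hpi := Real.pi_pos
  obtain ⟨N, hN, hN'⟩ := normSq_hasFDerivAt z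
  have hkp := kk_pos hb z
  have hTp := TT_pos hb z
  have hCp := CC_pos hb z
  have hT : HasFDerivAt (TT b) ((Real.pi / 2) • N) z := by
    refine ((hN.const_mul (Real.pi / 2)).add_const b).congr_of_eventuallyEq
      (Filter.Eventually.of_forall fun w => ?_)
    simp only [TT]; ring
  have hk : HasFDerivAt (kk b) ((1 / (2 * kk b z)) • (Real.pi ^ 2 / 4) • N) z := by
    have h1 : HasFDerivAt (fun w => Real.pi * (Real.pi * Complex.normSq w / 4 + b))
        ((Real.pi ^ 2 / 4) • N) z := by
      refine ((hN.const_mul (Real.pi ^ 2 / 4)).add_const (Real.pi * b)).congr_of_eventuallyEq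
        (Filter.Eventually.of_forall fun w => ?_)
      simp only; ring
    exact h1.sqrt (kk_arg_pos hb z).ne'
  have hre := Complex.reCLM.hasFDerivAt (x := z)
  have him := Complex.imCLM.hasFDerivAt (x := z)
  obtain ⟨α, hα, hα'⟩ : ∃ α : ℂ →L[ℝ] ℝ, HasFDerivAt (fun w => kk b w * w.re) α z ∧
      ∀ u, α u = kk b z * u.re + z.re * ((1 / (2 * kk b z)) * ((Real.pi ^ 2 / 4) * N u)) := by
    refine ⟨_, hk.mul hre, fun u => ?_⟩
    simp
  obtain ⟨σ, hσ, hσ'⟩ : ∃ σ : ℂ →L[ℝ] ℝ, HasFDerivAt (SS b) σ z ∧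
      ∀ u, σ u = (kk b z * u.im + z.im * ((1 / (2 * kk b z)) * ((Real.pi ^ 2 / 4) * N u)))
        / TT b z - kk b z * z.im * ((Real.pi / 2) * N u) / TT b z ^ 2 := by
    have h1 := (hasDerivAt_inv hTp.ne').comp_hasFDerivAt z hT
    refine ⟨_, ((hk.mul him).mul h1).congr_of_eventuallyEq
      (Filter.Eventually.of_forall fun w => ?_), fun u => ?_⟩
    · simp [SS, div_eq_mul_inv]
    · simp
      field_simp
      ring
  have key : ∀ u v, α u * σ v - σ u * α v =
      Real.pi * CC b z ^ 2 * ((starRingEnd ℂ) u * v).im := by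
    intro u v
    rw [CC_sq hb, SS, hα', hα', hσ', hσ', hN', hN']
    have hk2 := kk_sq hb z
    have hTd : TT b z = Real.pi * (z.re ^ 2 + z.im ^ 2) / 2 + b := by
      rw [TT, Complex.normSq_apply]; ring
    have hk3 : kk b z ^ 2 = Real.pi * (TT b z - Real.pi * (z.re ^ 2 + z.im ^ 2) / 4) := by
      rw [hk2, hTd, Complex.normSq_apply]; ring
    clear hTd hk2
    generalize kk b z = k at *
    generalize TT b z = T at *
    simp
    field_simp
    linear_combination 16 * k ^ 2 * T * (u.re * v.im - u.im * v.re) * hk3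
  have hC : HasFDerivAt (CC b) ((1 / (2 * CC b z)) • (-((2 * SS b z) • σ))) z := by
    have h1 : HasFDerivAt (fun w => 1 - SS b w ^ 2) (-((2 * SS b z) • σ)) z := by
      have := (hσ.pow 2).const_sub 1
      simpa using this
    exact h1.sqrt (by linarith [SS_sq_lt hb z])
  have hp := hα.mul ((hasDerivAt_inv hCp.ne').comp_hasFDerivAt z hC)
  have hq := (((Real.hasDerivAt_arcsin (SS_bd hb z).1.ne' (SS_bd hb z).2.ne).comp_hasFDerivAt z
    hσ).mul_const (Real.pi⁻¹))
  refine ⟨_, _, hp.congr_of_eventuallyEq (Filter.Eventually.of_forall fun w => ?_),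
    hq.congr_of_eventuallyEq (Filter.Eventually.of_forall fun w => ?_), fun u v => ?_⟩
  · simp [pp, div_eq_mul_inv]
  · simp [qq, div_eq_mul_inv]
  · have hc : Real.sqrt (1 - SS b z ^ 2) = CC b z := rfl
    have := key u v
    rw [hc]
    generalize ((starRingEnd ℂ) u * v).im = ω at *
    simp
    field_simp
    linear_combination CC b z ^ 2 * this

lemma pp_contDiff {b : ℝ} (hb : 0 < b) : ContDiff ℝ (⊤ : ℕ∞) (pp b) ∧
    ContDiff ℝ (⊤ : ℕ∞) (qq b) := by
  have h1 : ContDiff ℝ (⊤ : ℕ∞) (fun z : ℂ => z.re) := Complex.reCLM.contDiff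
  have h2 : ContDiff ℝ (⊤ : ℕ∞) (fun z : ℂ => z.im) := Complex.imCLM.contDiff
  have hn := normSq_contDiff
  have hT : ContDiff ℝ (⊤ : ℕ∞) (TT b) :=
    ((contDiff_const.mul hn).div_const _).add contDiff_const
  have hk : ContDiff ℝ (⊤ : ℕ∞) (kk b) :=
    (contDiff_const.mul (((contDiff_const.mul hn).div_const _).add contDiff_const)).sqrt
      fun z => (kk_arg_pos hb z).ne'
  have hS : ContDiff ℝ (⊤ : ℕ∞) (SS b) := (hk.mul h2).div hT fun z => (TT_pos hb z).ne'
  have hC : ContDiff ℝ (⊤ : ℕ∞) (CC b) :=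
    (contDiff_const.sub (hS.pow 2)).sqrt fun z => by linarith [SS_sq_lt hb z]
  refine ⟨(hk.mul h1).div hC fun z => (CC_pos hb z).ne', ?_⟩
  refine ContDiff.div_const ?_ _
  rw [contDiff_iff_contDiffAt]
  intro z
  exact (Real.contDiffAt_arcsin (SS_bd hb z).1.ne' (SS_bd hb z).2.ne).comp z hS.contDiffAt

/-- The unit complex number with angle `2πQ`. -/
def ex (Q : ℝ) : ℂ := Complex.exp (((2 * Real.pi * Q : ℝ) : ℂ) * Complex.I)

lemma ex_normSq (Q : ℝ) : Complex.normSq (ex Q) = 1 := by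
  rw [Complex.normSq_eq_norm_sq, ex, Complex.norm_exp_ofReal_mul_I]
  norm_num

lemma ex_eq {Q R : ℝ} (h : ex Q = ex R) : ∃ n : ℤ, Q - R = n := by
  unfold ex at h
  obtain ⟨n, hn⟩ := Complex.exp_eq_exp_iff_exists_int.1 h
  refine ⟨n, ?_⟩
  have hpi := Real.pi_pos
  have h1 := congrArg Complex.im hn
  simp at h1
  have h2 : (2 * Real.pi) * (Q - R) = (2 * Real.pi) * n := by linarith
  exact mul_left_cancel₀ (by positivity) h2

lemma ex_deriv {Q : ℂ × ℂ → ℝ} {Q' : ℂ × ℂ →L[ℝ] ℝ} {x : ℂ × ℂ} (h : HasFDerivAt Q Q' x) :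
    ∃ e' : ℂ × ℂ →L[ℝ] ℂ, HasFDerivAt (fun z => ex (Q z)) e' x ∧
      ∀ u, e' u = ex (Q x) * (Complex.I * ((2 * Real.pi * Q' u : ℝ) : ℂ)) := by
  have h1 := Complex.ofRealCLM.hasFDerivAt.comp x (h.const_mul (2 * Real.pi))
  have h2 := (h1.mul_const Complex.I).cexp
  refine ⟨_, h2, fun u => ?_⟩
  simp [ex]

lemma ex_smooth {Q : ℂ × ℂ → ℝ} (h : ContDiff ℝ (⊤ : ℕ∞) Q) :
    ContDiff ℝ (⊤ : ℕ∞) (fun z => ex (Q z)) :=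
  ((Complex.ofRealCLM.contDiff.comp (contDiff_const.mul h)).mul contDiff_const).cexp

lemma ball4_open (r : ℝ) : IsOpen (ball4 r) :=
  isOpen_lt (((Complex.continuous_normSq).comp continuous_fst).add
    ((Complex.continuous_normSq).comp continuous_snd)) continuous_const

lemma lower_embed {W : Set (ℝ × ℝ)} {s b r α₁ α₂ : ℝ} {m₁ m₂ : ℤ} (v : ℝ × ℝ)
    (hcop : IsCoprime m₁ m₂) (hdet : m₁ * α₁ + m₂ * α₂ = 1)
    (hW : ∀ x y : ℝ, |x| + |y| < s → (α₁ * x - m₂ * y + v.1, α₂ * x + m₁ * y + v.2) ∈ W)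
    (hWpos : ∀ P ∈ W, 0 < (P : ℝ × ℝ).1 ∧ 0 < P.2)
    (hb : 0 < b) (hr : Real.pi * r ^ 2 + 4 * b ≤ 2 * s) :
    SymplecticEmbeds4 (ball4 r) (mu4 ⁻¹' W) := by
  have hpi := Real.pi_pos
  set P₁ : ℂ × ℂ → ℝ := fun z => α₁ * pp b z.1 - m₂ * pp b z.2 + v.1 with hP₁
  set P₂ : ℂ × ℂ → ℝ := fun z => α₂ * pp b z.1 + m₁ * pp b z.2 + v.2 with hP₂
  set Q₁ : ℂ × ℂ → ℝ := fun z => m₁ * qq b z.1 - α₂ * qq b z.2 with hQ₁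
  set Q₂ : ℂ × ℂ → ℝ := fun z => m₂ * qq b z.1 + α₁ * qq b z.2 with hQ₂
  have hmem : ∀ z ∈ ball4 r, (P₁ z, P₂ z) ∈ W := by
    intro z hz
    apply hW
    have h1 := pp_bd hb z.1
    have h2 := pp_bd hb z.2
    have hz' : Complex.normSq z.1 + Complex.normSq z.2 < r ^ 2 := hz
    have h3 := mul_lt_mul_of_pos_left hz' hpi
    unfold TT at h1 h2
    linarith
  have pos₁ : ∀ z ∈ ball4 r, 0 < P₁ z := fun z hz => (hWpos _ (hmem z hz)).1
  have pos₂ : ∀ z ∈ ball4 r, 0 < P₂ z := fun z hz => (hWpos _ (hmem z hz)).2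
  obtain ⟨cp, cq⟩ := pp_contDiff hb
  have cp1 : ContDiff ℝ (⊤ : ℕ∞) (fun z : ℂ × ℂ => pp b z.1) := cp.comp contDiff_fst
  have cp2 : ContDiff ℝ (⊤ : ℕ∞) (fun z : ℂ × ℂ => pp b z.2) := cp.comp contDiff_snd
  have cq1 : ContDiff ℝ (⊤ : ℕ∞) (fun z : ℂ × ℂ => qq b z.1) := cq.comp contDiff_fst
  have cq2 : ContDiff ℝ (⊤ : ℕ∞) (fun z : ℂ × ℂ => qq b z.2) := cq.comp contDiff_snd
  have sP₁ : ContDiff ℝ (⊤ : ℕ∞) P₁ :=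
    ((contDiff_const.mul cp1).sub (contDiff_const.mul cp2)).add contDiff_const
  have sP₂ : ContDiff ℝ (⊤ : ℕ∞) P₂ :=
    ((contDiff_const.mul cp1).add (contDiff_const.mul cp2)).add contDiff_const
  have sQ₁ : ContDiff ℝ (⊤ : ℕ∞) Q₁ := (contDiff_const.mul cq1).sub (contDiff_const.mul cq2)
  have sQ₂ : ContDiff ℝ (⊤ : ℕ∞) Q₂ := (contDiff_const.mul cq1).add (contDiff_const.mul cq2)
  refine aux_embed (ball4_open r) (polMap P₁ P₂ (fun z => ex (Q₁ z)) (fun z => ex (Q₂ z)))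
    (polMap_smooth sP₁.contDiffOn sP₂.contDiffOn (ex_smooth sQ₁).contDiffOn
      (ex_smooth sQ₂).contDiffOn pos₁ pos₂) ?_ ?_ ?_
  · intro z hz w hw h
    obtain ⟨e1, e2, e3, e4⟩ := polMap_cancel (pos₁ z hz) (pos₂ z hz) (ex_normSq _) (ex_normSq _)
      (pos₁ w hw) (pos₂ w hw) (ex_normSq _) (ex_normSq _) h
    obtain ⟨n₁, hn₁⟩ := ex_eq e3
    obtain ⟨n₂, hn₂⟩ := ex_eq e4
    simp only [hP₁, hP₂, hQ₁, hQ₂] at e1 e2 hn₁ hn₂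
    have f1 : pp b z.1 = pp b w.1 := by
      linear_combination m₁ * e1 + m₂ * e2 - (pp b z.1 - pp b w.1) * hdet
    have f2 : pp b z.2 = pp b w.2 := by
      linear_combination -α₂ * e1 + α₁ * e2 - (pp b z.2 - pp b w.2) * hdet
    have g1 : qq b z.1 - qq b w.1 = α₁ * n₁ + α₂ * n₂ := by
      linear_combination α₁ * hn₁ + α₂ * hn₂ - (qq b z.1 - qq b w.1) * hdet
    have g2 : qq b z.2 - qq b w.2 = ((-m₂ * n₁ + m₁ * n₂ : ℤ) : ℝ) := by
      push_cast
      linear_combination -m₂ * hn₁ + m₁ * hn₂ - (qq b z.2 - qq b w.2) * hdet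
    have small : ∀ (k : ℤ) (x y : ℂ), qq b x - qq b y = (k : ℝ) → k = 0 := by
      intro k x y hk
      have h1 := qq_bd hb x
      have h2 := qq_bd hb y
      have h3 : (k : ℝ) < ((1 : ℤ) : ℝ) := by push_cast; linarith
      have h4 : ((-1 : ℤ) : ℝ) < k := by push_cast; linarith
      have h5 := Int.cast_lt.1 h3
      have h6 := Int.cast_lt.1 h4
      omega
    have k2 := small _ _ _ g2
    obtain ⟨x, y, hxy⟩ := hcop
    have j1 : n₁ = m₁ * (x * n₁ + y * n₂) := by linear_combination -n₁ * hxy - y * k2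
    have j2 : n₂ = m₂ * (x * n₁ + y * n₂) := by linear_combination -n₂ * hxy + x * k2
    have g1' : qq b z.1 - qq b w.1 = ((x * n₁ + y * n₂ : ℤ) : ℝ) := by
      have j1' : (n₁ : ℝ) = m₁ * (x * n₁ + y * n₂) := by exact_mod_cast j1
      have j2' : (n₂ : ℝ) = m₂ * (x * n₁ + y * n₂) := by exact_mod_cast j2
      push_cast
      linear_combination g1 + α₁ * j1' + α₂ * j2' + (x * n₁ + y * n₂) * hdet
    have k1 := small _ _ _ g1'
    rw [k1] at g1'
    rw [k2] at g2
    push_cast at g1' g2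
    exact Prod.ext (pq_inj hb f1 (by linarith)) (pq_inj hb f2 (by linarith))
  · intro z hz
    change mu4 _ ∈ W
    rw [polMap_mu (pos₁ z hz) (pos₂ z hz) (ex_normSq _) (ex_normSq _)]
    exact hmem z hz
  · intro z hz
    obtain ⟨p1, q1, hp1, hq1, H1⟩ := pq_deriv hb z.1
    obtain ⟨p2, q2, hp2, hq2, H2⟩ := pq_deriv hb z.2
    have dp1 : HasFDerivAt (fun z : ℂ × ℂ => pp b z.1) _ z := hp1.comp z hasFDerivAt_fst
    have dp2 : HasFDerivAt (fun z : ℂ × ℂ => pp b z.2) _ z := hp2.comp z hasFDerivAt_snd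
    have dq1 : HasFDerivAt (fun z : ℂ × ℂ => qq b z.1) _ z := hq1.comp z hasFDerivAt_fst
    have dq2 : HasFDerivAt (fun z : ℂ × ℂ => qq b z.2) _ z := hq2.comp z hasFDerivAt_snd
    have dP₁ := ((dp1.const_mul α₁).sub (dp2.const_mul (m₂ : ℝ))).add_const v.1
    have dP₂ := ((dp1.const_mul α₂).add (dp2.const_mul (m₁ : ℝ))).add_const v.2
    obtain ⟨E₁, hE₁, k₁⟩ := ex_deriv ((dq1.const_mul (m₁ : ℝ)).sub (dq2.const_mul α₂))
    obtain ⟨E₂, hE₂, k₂⟩ := ex_deriv ((dq1.const_mul (m₂ : ℝ)).add (dq2.const_mul α₁))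
    refine polMap_symp dP₁ (pos₁ z hz) hE₁ k₁ (ex_normSq _) dP₂ (pos₂ z hz) hE₂ k₂ (ex_normSq _)
      fun u w => ?_
    have h1 := H1 u.1 w.1
    have h2 := H2 u.2 w.2
    rw [stdSymp4, ← h1, ← h2]
    simp
    linear_combination 2 * Real.pi * (p1 u.1 * q1 w.1 - q1 u.1 * p1 w.1 +
      (p2 u.2 * q2 w.2 - q2 u.2 * p2 w.2)) * hdet

lemma ne_zero_of_normSq {z : ℂ} (h : 0 < Real.pi * Complex.normSq z) : z ≠ 0 := by
  rintro rfl
  simp at h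

lemma normSq_zpow_mul {x y : ℂ} (hx : Complex.normSq x = 1) (hy : Complex.normSq y = 1)
    (n k : ℤ) : Complex.normSq (x ^ n * y ^ k) = 1 := by
  rw [map_mul, map_zpow₀, map_zpow₀, hx, hy]
  simp

lemma upper_embed {W : Set (ℝ × ℝ)} {r d D : ℝ} {m₁ m₂ n₁ n₂ : ℤ} (hWo : IsOpen W)
    (hdet : m₁ * n₁ + m₂ * n₂ = 1)
    (hWpos : ∀ P ∈ W, 0 < (P : ℝ × ℝ).1 ∧ 0 < P.2)
    (h1 : ∀ P ∈ W, 0 < m₁ * (P : ℝ × ℝ).1 + m₂ * P.2 + d)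
    (h1' : ∀ P ∈ W, m₁ * (P : ℝ × ℝ).1 + m₂ * P.2 + d < Real.pi * r ^ 2)
    (h2 : ∀ P ∈ W, 0 < -n₂ * (P : ℝ × ℝ).1 + n₁ * P.2 + D) :
    SymplecticEmbeds4 (mu4 ⁻¹' W) (cyl4 r) := by
  have hpi := Real.pi_pos
  have hdetR : (m₁ : ℝ) * n₁ + m₂ * n₂ = 1 := by exact_mod_cast hdet
  set P₁ : ℂ × ℂ → ℝ := fun z => m₁ * (Real.pi * Complex.normSq z.1) +
    m₂ * (Real.pi * Complex.normSq z.2) + d with hP₁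
  set P₂ : ℂ × ℂ → ℝ := fun z => -n₂ * (Real.pi * Complex.normSq z.1) +
    n₁ * (Real.pi * Complex.normSq z.2) + D with hP₂
  set e₁ : ℂ × ℂ → ℂ := fun z => ang z.1 ^ n₁ * ang z.2 ^ n₂ with he₁
  set e₂ : ℂ × ℂ → ℂ := fun z => ang z.1 ^ (-m₂) * ang z.2 ^ m₁ with he₂
  have pos₁ : ∀ z ∈ mu4 ⁻¹' W, 0 < P₁ z := fun z hz => h1 _ hz
  have pos₂ : ∀ z ∈ mu4 ⁻¹' W, 0 < P₂ z := fun z hz => h2 _ hz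
  have nz₁ : ∀ z ∈ mu4 ⁻¹' W, z.1 ≠ 0 := fun z hz => ne_zero_of_normSq (hWpos _ hz).1
  have nz₂ : ∀ z ∈ mu4 ⁻¹' W, z.2 ≠ 0 := fun z hz => ne_zero_of_normSq (hWpos _ hz).2
  have u₁ : ∀ z ∈ mu4 ⁻¹' W, Complex.normSq (e₁ z) = 1 := fun z hz =>
    normSq_zpow_mul (ang_normSq (nz₁ z hz)) (ang_normSq (nz₂ z hz)) _ _
  have u₂ : ∀ z ∈ mu4 ⁻¹' W, Complex.normSq (e₂ z) = 1 := fun z hz =>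
    normSq_zpow_mul (ang_normSq (nz₁ z hz)) (ang_normSq (nz₂ z hz)) _ _
  have az : ∀ {z : ℂ}, z ≠ 0 → ang z ≠ 0 := fun {z} hz h => by
    have := ang_normSq hz
    rw [h] at this
    simp at this
  have c1 : ContDiff ℝ (⊤ : ℕ∞) (fun z : ℂ × ℂ => Complex.normSq z.1) :=
    normSq_contDiff.comp contDiff_fst
  have c2 : ContDiff ℝ (⊤ : ℕ∞) (fun z : ℂ × ℂ => Complex.normSq z.2) :=
    normSq_contDiff.comp contDiff_snd
  have sP₁ : ContDiff ℝ (⊤ : ℕ∞) P₁ :=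
    ((contDiff_const.mul (contDiff_const.mul c1)).add
      (contDiff_const.mul (contDiff_const.mul c2))).add contDiff_const
  have sP₂ : ContDiff ℝ (⊤ : ℕ∞) P₂ :=
    ((contDiff_const.mul (contDiff_const.mul c1)).add
      (contDiff_const.mul (contDiff_const.mul c2))).add contDiff_const
  have a1 : ∀ z ∈ mu4 ⁻¹' W, ContDiffAt ℝ (⊤ : ℕ∞) (fun z : ℂ × ℂ => ang z.1) z :=
    fun z hz => (ang_contDiffAt (nz₁ z hz)).comp z contDiff_fst.contDiffAt
  have a2 : ∀ z ∈ mu4 ⁻¹' W, ContDiffAt ℝ (⊤ : ℕ∞) (fun z : ℂ × ℂ => ang z.2) z :=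
    fun z hz => (ang_contDiffAt (nz₂ z hz)).comp z contDiff_snd.contDiffAt
  have se : ∀ n k : ℤ, ContDiffOn ℝ (⊤ : ℕ∞) (fun z : ℂ × ℂ => ang z.1 ^ n * ang z.2 ^ k)
      (mu4 ⁻¹' W) := fun n k z hz =>
    ((zpow_contDiffAt n (a1 z hz) (az (nz₁ z hz))).mul
      (zpow_contDiffAt k (a2 z hz) (az (nz₂ z hz)))).contDiffWithinAt
  have hopen : IsOpen (mu4 ⁻¹' W) := by
    refine hWo.preimage ?_
    exact ((continuous_const.mul c1.continuous).prodMk (continuous_const.mul c2.continuous))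
  refine aux_embed hopen (polMap P₁ P₂ e₁ e₂)
    (polMap_smooth sP₁.contDiffOn sP₂.contDiffOn (se _ _) (se _ _) pos₁ pos₂) ?_ ?_ ?_
  · intro z hz w hw h
    obtain ⟨q1, q2, q3, q4⟩ := polMap_cancel (pos₁ z hz) (pos₂ z hz) (u₁ z hz) (u₂ z hz)
      (pos₁ w hw) (pos₂ w hw) (u₁ w hw) (u₂ w hw) h
    simp only [hP₁, hP₂] at q1 q2
    have f1 : Real.pi * Complex.normSq z.1 = Real.pi * Complex.normSq w.1 := by
      linear_combination n₁ * q1 - m₂ * q2 -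
        (Real.pi * Complex.normSq z.1 - Real.pi * Complex.normSq w.1) * hdetR
    have f2 : Real.pi * Complex.normSq z.2 = Real.pi * Complex.normSq w.2 := by
      linear_combination n₂ * q1 + m₁ * q2 -
        (Real.pi * Complex.normSq z.2 - Real.pi * Complex.normSq w.2) * hdetR
    have r1 : ∀ z ∈ mu4 ⁻¹' W, ang z.1 = e₁ z ^ m₁ * e₂ z ^ (-n₂) := by
      intro z hz
      have x1 := az (nz₁ z hz)
      have x2 := az (nz₂ z hz)
      simp only [he₁, he₂, mul_zpow, ← zpow_mul]
      have : ∀ a b c d : ℂ, a * b * (c * d) = (a * c) * (b * d) := fun _ _ _ _ => by ring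
      rw [this, ← zpow_add₀ x1, ← zpow_add₀ x2]
      have t1 : n₁ * m₁ + -m₂ * -n₂ = 1 := by linear_combination hdet
      have t2 : n₂ * m₁ + m₁ * -n₂ = 0 := by ring
      rw [t1, t2]
      simp
    have r2 : ∀ z ∈ mu4 ⁻¹' W, ang z.2 = e₁ z ^ m₂ * e₂ z ^ n₁ := by
      intro z hz
      have x1 := az (nz₁ z hz)
      have x2 := az (nz₂ z hz)
      simp only [he₁, he₂, mul_zpow, ← zpow_mul]
      have : ∀ a b c d : ℂ, a * b * (c * d) = (a * c) * (b * d) := fun _ _ _ _ => by ring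
      rw [this, ← zpow_add₀ x1, ← zpow_add₀ x2]
      have t1 : n₁ * m₂ + -m₂ * n₁ = 0 := by ring
      have t2 : n₂ * m₂ + m₁ * n₁ = 1 := by linear_combination hdet
      rw [t1, t2]
      simp
    refine Prod.ext (eq_of_ang (mul_left_cancel₀ hpi.ne' f1) (nz₁ z hz) ?_)
      (eq_of_ang (mul_left_cancel₀ hpi.ne' f2) (nz₂ z hz) ?_)
    · rw [r1 z hz, r1 w hw, q3, q4]
    · rw [r2 z hz, r2 w hw, q3, q4]
  · intro z hz
    have hmu := congrArg Prod.fst (polMap_mu (pos₁ z hz) (pos₂ z hz) (u₁ z hz) (u₂ z hz))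
    have := h1' _ hz
    change Complex.normSq _ < r ^ 2
    simp only [mu4] at hmu
    refine lt_of_mul_lt_mul_left ?_ hpi.le
    rw [hmu]
    exact this
  · intro z hz
    have hz1 := nz₁ z hz
    have hz2 := nz₂ z hz
    obtain ⟨N₁, hN₁, k₁⟩ := normSq_hasFDerivAt z.1
    obtain ⟨N₂, hN₂, k₂⟩ := normSq_hasFDerivAt z.2
    obtain ⟨M₁, hM₁, l₁⟩ := ang_hasFDerivAt hz1
    obtain ⟨M₂, hM₂, l₂⟩ := ang_hasFDerivAt hz2
    have dN₁ : HasFDerivAt (fun z : ℂ × ℂ => Complex.normSq z.1) _ z :=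
      hN₁.comp z hasFDerivAt_fst
    have dN₂ : HasFDerivAt (fun z : ℂ × ℂ => Complex.normSq z.2) _ z :=
      hN₂.comp z hasFDerivAt_snd
    have dM₁ : HasFDerivAt (fun z : ℂ × ℂ => ang z.1) _ z := hM₁.comp z hasFDerivAt_fst
    have dM₂ : HasFDerivAt (fun z : ℂ × ℂ => ang z.2) _ z := hM₂.comp z hasFDerivAt_snd
    have dP₁ := (((dN₁.const_mul Real.pi).const_mul (m₁ : ℝ)).add
      ((dN₂.const_mul Real.pi).const_mul (m₂ : ℝ))).add_const d
    have dP₂ := (((dN₁.const_mul Real.pi).const_mul (-n₂ : ℝ)).add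
      ((dN₂.const_mul Real.pi).const_mul (n₁ : ℝ))).add_const D
    have L₁ : ∀ n : ℤ, _ := fun n => zpow_log n dM₁ (fun u => l₁ u.1) (az hz1)
    have L₂ : ∀ n : ℤ, _ := fun n => zpow_log n dM₂ (fun u => l₂ u.2) (az hz2)
    obtain ⟨A₁, hA₁, a₁⟩ := L₁ n₁
    obtain ⟨A₂, hA₂, a₂⟩ := L₂ n₂
    obtain ⟨B₁, hB₁, b₁⟩ := L₁ (-m₂)
    obtain ⟨B₂, hB₂, b₂⟩ := L₂ m₁
    obtain ⟨E₁, hE₁, t₁⟩ := mul_log hA₁ a₁ hA₂ a₂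
    obtain ⟨E₂, hE₂, t₂⟩ := mul_log hB₁ b₁ hB₂ b₂
    refine polMap_symp dP₁ (pos₁ z hz) hE₁ t₁ (u₁ z hz) dP₂ (pos₂ z hz) hE₂ t₂ (u₂ z hz)
      fun u w => ?_
    have y1 := Complex.normSq_pos.2 hz1
    have y2 := Complex.normSq_pos.2 hz2
    have key : ∀ (x a c : ℂ), x ≠ 0 →
        (2 * (x.re * a.re + x.im * a.im)) * ((x.re * c.im - x.im * c.re) / Complex.normSq x) -
        ((x.re * a.im - x.im * a.re) / Complex.normSq x) * (2 * (x.re * c.re + x.im * c.im)) =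
        2 * ((starRingEnd ℂ) a * c).im := by
      intro x a c hx
      have := Complex.normSq_pos.2 hx
      rw [div_mul_eq_mul_div, mul_div_assoc', ← sub_div, div_eq_iff this.ne']
      rw [Complex.normSq_apply]
      simp
      ring
    have K1 := key z.1 u.1 w.1 hz1
    have K2 := key z.2 u.2 w.2 hz2
    simp only [stdSymp4]
    simp only [add_apply, smul_apply, ContinuousLinearMap.comp_apply, smul_eq_mul, k₁, k₂,
      ContinuousLinearMap.coe_fst', ContinuousLinearMap.coe_snd']
    push_cast
    generalize ((starRingEnd ℂ) u.1 * w.1).im = o1 at *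
    generalize ((starRingEnd ℂ) u.2 * w.2).im = o2 at *
    generalize (z.1.re * w.1.im - z.1.im * w.1.re) / Complex.normSq z.1 = s1 at *
    generalize (z.1.re * u.1.im - z.1.im * u.1.re) / Complex.normSq z.1 = s2 at *
    generalize (z.2.re * w.2.im - z.2.im * w.2.re) / Complex.normSq z.2 = s3 at *
    generalize (z.2.re * u.2.im - z.2.im * u.2.re) / Complex.normSq z.2 = s4 at *
    linear_combination Real.pi * (K1 + K2) + Real.pi * (
      (2 * (z.1.re * u.1.re + z.1.im * u.1.im)) * s1 - s2 * (2 * (z.1.re * w.1.re + z.1.im * w.1.im))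
      + (2 * (z.2.re * u.2.re + z.2.im * u.2.im)) * s3
      - s4 * (2 * (z.2.re * w.2.re + z.2.im * w.2.im))) * hdetR

lemma diamond_mem {A : Set (ℝ × ℝ)} (hconv : Convex ℝ A) (h0 : (0 : ℝ × ℝ) ∈ A) {a b : ℝ × ℝ}
    (ha : a ∈ A) (ha' : -a ∈ A) (hb : b ∈ A) (hb' : -b ∈ A) {x y : ℝ} (h : |x| + |y| ≤ 1) :
    x • a + y • b ∈ A := by
  have key : ∀ a ∈ A, ∀ b ∈ A, ∀ x y : ℝ, 0 ≤ x → 0 ≤ y → x + y ≤ 1 → x • a + y • b ∈ A := by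
    intro a ha b hb x y hx hy hxy
    have := hconv.sum_mem (t := Finset.univ) (w := ![x, y, 1 - x - y]) (z := ![a, b, 0])
      (by intro i _; fin_cases i <;> simp <;> linarith)
      (by simp [Fin.sum_univ_three])
      (by intro i _; fin_cases i <;> simp [ha, hb, h0])
    simpa [Fin.sum_univ_three] using this
  rcases le_total 0 x with hx | hx <;> rcases le_total 0 y with hy | hy
  · rw [abs_of_nonneg hx, abs_of_nonneg hy] at h
    exact key a ha b hb x y hx hy h
  · rw [abs_of_nonneg hx, abs_of_nonpos hy] at h
    simpa using key a ha (-b) hb' x (-y) hx (by linarith) h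
  · rw [abs_of_nonpos hx, abs_of_nonneg hy] at h
    simpa using key (-a) ha' b hb (-x) y (by linarith) hy h
  · rw [abs_of_nonpos hx, abs_of_nonpos hy] at h
    simpa using key (-a) ha' (-b) hb' (-x) (-y) (by linarith) (by linarith) h

lemma diamond_interior {A : Set (ℝ × ℝ)} (hconv : Convex ℝ A) (h0 : (0 : ℝ × ℝ) ∈ interior A)
    {a b : ℝ × ℝ} (ha : a ∈ A) (ha' : -a ∈ A) (hb : b ∈ A) (hb' : -b ∈ A) {x y : ℝ}
    (h : |x| + |y| < 1) : x • a + y • b ∈ interior A := by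
  set l := (1 + (|x| + |y|)) / 2 with hl
  have hρ : 0 ≤ |x| + |y| := by positivity
  have hl0 : 0 < l := by positivity
  have hl1 : l < 1 := by rw [hl]; linarith
  have hm : (x / l) • a + (y / l) • b ∈ A := by
    refine diamond_mem hconv (interior_subset h0) ha ha' hb hb' ?_
    rw [abs_div x l, abs_div y l, abs_of_pos hl0, ← add_div, div_le_one hl0, hl]
    linarith
  have := hconv.combo_interior_self_mem_interior h0 hm (a := 1 - l) (b := l) (by linarith)
    hl0.le (by ring)
  rw [smul_zero, zero_add, smul_add, smul_smul, smul_smul, mul_div_cancel₀ _ hl0.ne',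
    mul_div_cancel₀ _ hl0.ne'] at this
  exact this

lemma area_mem {A : Set (ℝ × ℝ)} (hcomp : IsCompact A) (hconv : Convex ℝ A)
    (h0 : (0 : ℝ × ℝ) ∈ A) (hsym : ∀ x ∈ A, -x ∈ A) {s m₁ m₂ : ℝ} (hs : 0 < s)
    (hm : ∀ x ∈ A, m₁ * (x : ℝ × ℝ).1 + m₂ * x.2 ≤ s)
    (harea : 4 * s ^ 2 ≤ (MeasureTheory.volume A).toReal) :
    ((-(s * m₂), s * m₁) : ℝ × ℝ) ∈ A := by
  by_contra hx
  obtain ⟨f, u, hf1, hf2⟩ := geometric_hahn_banach_closed_point hconv hcomp.isClosed hx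
  set g₁ := f (1, 0) with hg₁
  set g₂ := f (0, 1) with hg₂
  have hf : ∀ x : ℝ × ℝ, f x = g₁ * x.1 + g₂ * x.2 := by
    intro x
    have : x = x.1 • ((1, 0) : ℝ × ℝ) + x.2 • ((0, 1) : ℝ × ℝ) := by ext <;> simp
    conv_lhs => rw [this]
    rw [map_add, map_smul, map_smul]
    simp only [smul_eq_mul]
    ring
  have hu : 0 < u := by simpa using hf1 0 h0
  rw [hf] at hf2
  simp only at hf2
  set δ := m₁ * g₂ - m₂ * g₁ with hδ
  have hδs : u < s * δ := by rw [hδ]; linarith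
  have hδ0 : 0 < δ := by
    by_contra h
    have : s * δ ≤ 0 := mul_nonpos_of_nonneg_of_nonpos hs.le (not_lt.1 h)
    linarith
  set T : (ℝ × ℝ) →ₗ[ℝ] (ℝ × ℝ) := Matrix.toLin (Module.Basis.finTwoProd ℝ)
    (Module.Basis.finTwoProd ℝ) !![m₁, m₂; g₁, g₂] with hT
  have hdet : LinearMap.det T = δ := by
    rw [hT, LinearMap.det_toLin, Matrix.det_fin_two_of]
  have hsub : A ⊆ T ⁻¹' (Icc (-s) s ×ˢ Icc (-u) u) := by
    intro x hxA
    rw [mem_preimage, hT, Matrix.toLin_finTwoProd_apply]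
    have a1 := hm x hxA
    have a2 := hm _ (hsym x hxA)
    have a3 := hf1 x hxA
    have a4 := hf1 _ (hsym x hxA)
    rw [hf] at a3 a4
    simp only [Prod.fst_neg, Prod.snd_neg] at a2 a4
    refine ⟨⟨?_, ?_⟩, ⟨?_, ?_⟩⟩ <;> simp only <;> linarith
  have hv := MeasureTheory.measure_mono (μ := MeasureTheory.volume) hsub
  rw [MeasureTheory.Measure.addHaar_preimage_linearMap _ (by rw [hdet]; exact hδ0.ne'), hdet,
    MeasureTheory.Measure.volume_eq_prod, MeasureTheory.Measure.prod_prod, Real.volume_Icc,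
    Real.volume_Icc, ← ENNReal.ofReal_mul (by linarith), ← ENNReal.ofReal_mul (by positivity),
    abs_of_pos (by positivity)] at hv
  have hv2 := ENNReal.toReal_mono ENNReal.ofReal_ne_top hv
  rw [ENNReal.toReal_ofReal (by
    have : 0 ≤ δ⁻¹ := by positivity
    refine mul_nonneg this (mul_nonneg (by linarith) (by linarith)))] at hv2
  rw [← MeasureTheory.Measure.volume_eq_prod] at hv2
  have h3 : 4 * s ^ 2 ≤ δ⁻¹ * ((s - -s) * (u - -u)) := harea.trans hv2
  rw [inv_mul_eq_div, le_div_iff₀ hδ0] at h3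
  nlinarith

/-- Let `A ⊂ ℝ²` be compact, centrally symmetric, convex with nonempty interior, and
let `s` be the minimum over `m ∈ ℤ² ∖ {0}` of the support function of `A` (the systole
of the corresponding codisc bundle).  If `area(A) ≥ 4s²` (systolic ratio at most `1/8`),
then for every translate of `interior A` into the open positive quadrant and every
normalized symplectic capacity `c` on subsets of `ℝ⁴`,
`c(μ⁻¹(interior A + v)) = 2s`. -/
theorem capacity_small_systolic_ratio_codisc
    (A : Set (ℝ × ℝ)) (hAcomp : IsCompact A) (hAconv : Convex ℝ A)
    (hAint : (interior A).Nonempty) (hAsym : A = -A)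
    (s : ℝ)
    (hs : IsLeast
      {t : ℝ | ∃ m : ℤ × ℤ, m ≠ 0 ∧
        t = sSup ((fun x : ℝ × ℝ => (m.1 : ℝ) * x.1 + (m.2 : ℝ) * x.2) '' A)} s)
    (harea : 4 * s ^ 2 ≤ (MeasureTheory.volume A).toReal) :
    ∀ v : ℝ × ℝ, (∀ x ∈ interior A, 0 < (x : ℝ × ℝ).1 + v.1 ∧ 0 < x.2 + v.2) →
      ∀ c : Set (ℂ × ℂ) → ℝ≥0∞, IsNormalizedCapacity4 c →
        c (mu4 ⁻¹' ((fun x : ℝ × ℝ => x + v) '' interior A)) =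
          ENNReal.ofReal (2 * s) := by
  
  intro v hv c hc
  obtain ⟨hmono, -, hnorm⟩ := hc
  have hpi := Real.pi_pos
  have hsym : ∀ x ∈ A, -x ∈ A := fun x hx => by
    rw [hAsym]
    simpa using hx
  have hisym : ∀ x ∈ interior A, -x ∈ interior A := fun x hx => by
    have h1 : -interior A ⊆ interior A := by
      refine interior_maximal ?_ isOpen_interior.neg
      intro y hy
      simpa using hsym _ (interior_subset (Set.mem_neg.1 hy))
    exact h1 (by simpa using hx)
  have h0 : (0 : ℝ × ℝ) ∈ interior A := by
    obtain ⟨x, hx⟩ := hAint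
    have := hAconv.interior hx (hisym x hx) (a := 1 / 2) (b := 1 / 2) (by norm_num) (by norm_num)
      (by norm_num)
    simpa using this
  have hbdd : ∀ m₁ m₂ : ℝ, IsCompact ((fun x : ℝ × ℝ => m₁ * x.1 + m₂ * x.2) '' A) :=
    fun m₁ m₂ => hAcomp.image (by fun_prop)
  obtain ⟨⟨m, hm0, hms⟩, hleast⟩ := hs
  have hle : ∀ x ∈ A, (m.1 : ℝ) * x.1 + m.2 * x.2 ≤ s := fun x hx => by
    rw [hms]
    exact le_csSup (hbdd _ _).bddAbove ⟨x, hx, rfl⟩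
  have hm0R : 0 < (m.1 : ℝ) * m.1 + m.2 * m.2 := by
    rcases eq_or_ne m.1 0 with h | h
    · have h2 : m.2 ≠ 0 := fun h2 => hm0 (Prod.ext h h2)
      have : (m.2 : ℝ) ≠ 0 := by exact_mod_cast h2
      have := mul_self_pos.2 this
      nlinarith [mul_self_nonneg (m.1 : ℝ)]
    · have : (m.1 : ℝ) ≠ 0 := by exact_mod_cast h
      have := mul_self_pos.2 this
      nlinarith [mul_self_nonneg (m.2 : ℝ)]
  have hlt : ∀ x ∈ interior A, (m.1 : ℝ) * x.1 + m.2 * x.2 < s := fun x hx => by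
    have hcont : Filter.Tendsto (fun t : ℝ => x + t • ((m.1 : ℝ), (m.2 : ℝ)))
        (nhdsWithin 0 (Ioi 0)) (nhds x) := by
      have : Continuous (fun t : ℝ => x + t • ((m.1 : ℝ), (m.2 : ℝ))) := by fun_prop
      have h := this.tendsto 0
      simp only [zero_smul, add_zero] at h
      exact h.mono_left nhdsWithin_le_nhds
    have hev := hcont.eventually (isOpen_interior.mem_nhds hx)
    obtain ⟨t, ht1, ht2⟩ := (hev.and self_mem_nhdsWithin).exists
    have h1 := hle _ (interior_subset ht1)
    simp only [Prod.fst_add, Prod.snd_add, Prod.smul_fst, Prod.smul_snd, smul_eq_mul] at h1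
    have ht : 0 < t := ht2
    nlinarith [mul_pos ht hm0R]
  have hspos : 0 < s := by simpa using hlt 0 h0
  have hcop : IsCoprime m.1 m.2 := by
    rw [Int.isCoprime_iff_gcd_eq_one]
    by_contra hg
    set g := Int.gcd m.1 m.2 with hgdef
    have hg0 : g ≠ 0 := fun h => hm0 (Prod.ext (Int.gcd_eq_zero_iff.1 h).1 (Int.gcd_eq_zero_iff.1 h).2)
    have hg2 : 2 ≤ g := by omega
    obtain ⟨k₁, hk₁⟩ : (g : ℤ) ∣ m.1 := Int.gcd_dvd_left ..
    obtain ⟨k₂, hk₂⟩ : (g : ℤ) ∣ m.2 := Int.gcd_dvd_right ..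
    have hk0 : ((k₁, k₂) : ℤ × ℤ) ≠ 0 := fun h => hm0 (by
      have h1 := congrArg Prod.fst h
      have h2 := congrArg Prod.snd h
      simp only [Prod.fst_zero, Prod.snd_zero] at h1 h2
      rw [h1, mul_zero] at hk₁
      rw [h2, mul_zero] at hk₂
      exact Prod.ext hk₁ hk₂)
    have h1 := hleast ⟨(k₁, k₂), hk0, rfl⟩
    have hgR : (2 : ℝ) ≤ g := by exact_mod_cast hg2
    have h2 : sSup ((fun x : ℝ × ℝ => (k₁ : ℝ) * x.1 + (k₂ : ℝ) * x.2) '' A) ≤ s / 2 := by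
      refine csSup_le (Set.Nonempty.image _ ⟨0, interior_subset h0⟩) ?_
      rintro _ ⟨x, hx, rfl⟩
      have h3 := hle x hx
      have e1 : (m.1 : ℝ) = g * k₁ := by rw [hk₁]; push_cast; ring
      have e2 : (m.2 : ℝ) = g * k₂ := by rw [hk₂]; push_cast; ring
      rw [e1, e2] at h3
      simp only
      by_contra hcon
      push Not at hcon
      nlinarith
    have h3 : s ≤ s / 2 := le_trans h1 h2
    linarith
  obtain ⟨a, haA, has⟩ : ∃ a ∈ A, (m.1 : ℝ) * a.1 + m.2 * a.2 = s := by
    have := (hbdd m.1 m.2).sSup_mem (Set.Nonempty.image _ ⟨0, interior_subset h0⟩)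
    rw [← hms] at this
    obtain ⟨a, h1, h2⟩ := this
    exact ⟨a, h1, h2⟩
  have hw := area_mem hAcomp hAconv (interior_subset h0) hsym hspos hle harea
  set W : Set (ℝ × ℝ) := (fun x : ℝ × ℝ => x + v) '' interior A with hWdef
  have hWo : IsOpen W := (Homeomorph.addRight v).isOpenMap _ isOpen_interior
  have hWpos : ∀ P ∈ W, 0 < (P : ℝ × ℝ).1 ∧ 0 < P.2 := by
    rintro _ ⟨x, hx, rfl⟩
    exact hv x hx
  apply le_antisymm
  · obtain ⟨n₁, n₂, hn⟩ := hcop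
    have hr : Real.pi * (Real.sqrt (2 * s / Real.pi)) ^ 2 = 2 * s := by
      rw [Real.sq_sqrt (by positivity)]
      field_simp
    have hrp : 0 < Real.sqrt (2 * s / Real.pi) := Real.sqrt_pos.2 (by positivity)
    obtain ⟨K, hK⟩ := (hbdd (-n₂) n₁).bddBelow
    have hemb : SymplecticEmbeds4 (mu4 ⁻¹' W) (cyl4 (Real.sqrt (2 * s / Real.pi))) := by
      refine upper_embed (d := s - (m.1 * v.1 + m.2 * v.2))
        (D := 1 - K - (-n₂ * v.1 + n₁ * v.2)) (m₁ := m.1) (m₂ := m.2) (n₁ := n₁) (n₂ := n₂)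
        hWo (by linarith) hWpos ?_ ?_ ?_
      · rintro _ ⟨x, hx, rfl⟩
        have := hlt _ (hisym x hx)
        simp only [Prod.fst_neg, Prod.snd_neg, Prod.fst_add, Prod.snd_add] at this ⊢
        linarith
      · rintro _ ⟨x, hx, rfl⟩
        have := hlt _ hx
        rw [hr]
        simp only [Prod.fst_add, Prod.snd_add] at this ⊢
        linarith
      · rintro _ ⟨x, hx, rfl⟩
        have := hK ⟨x, interior_subset hx, rfl⟩
        simp only [Prod.fst_add, Prod.snd_add] at this ⊢
        linarith
    refine (hmono _ _ hemb).trans ?_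
    rw [(hnorm _ hrp).2, hr]
  · by_contra hcon
    push Not at hcon
    set X := c (mu4 ⁻¹' W) with hX
    have hXtop : X ≠ ⊤ := ne_top_of_lt hcon
    set y := X.toReal with hy
    have hy0 : 0 ≤ y := ENNReal.toReal_nonneg
    have hXy : X = ENNReal.ofReal y := (ENNReal.ofReal_toReal hXtop).symm
    rw [hXy, ENNReal.ofReal_lt_ofReal_iff (by linarith)] at hcon
    have hq : 0 < (s + y / 2) / Real.pi := by positivity
    have hr : Real.pi * (Real.sqrt ((s + y / 2) / Real.pi)) ^ 2 = s + y / 2 := by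
      rw [Real.sq_sqrt hq.le]
      field_simp
    have hemb : SymplecticEmbeds4 (ball4 (Real.sqrt ((s + y / 2) / Real.pi))) (mu4 ⁻¹' W) := by
      refine lower_embed (s := s) (b := (2 * s - y) / 8) (α₁ := a.1 / s) (α₂ := a.2 / s) v hcop ?_
        ?_ hWpos (by linarith) (by rw [hr]; linarith)
      · field_simp
        linarith
      · intro x y hxy
        have hd := diamond_interior hAconv h0 haA (hsym _ haA) hw (hsym _ hw)
          (x := x / s) (y := y / s) (by
            rw [abs_div, abs_div, abs_of_pos hspos, ← add_div, div_lt_one hspos]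
            exact hxy)
        refine ⟨_, hd, ?_⟩
        ext
        · simp
          field_simp
          ring
        · simp
          field_simp
    have h1 := hmono _ _ hemb
    rw [(hnorm _ (Real.sqrt_pos.2 hq)).1, hr] at h1
    change _ ≤ X at h1
    rw [hXy, ENNReal.ofReal_le_ofReal_iff hy0] at h1
    linarith
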